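/- Let T₁, T₂ be non-crossing spanning trees on n points in convex position, where T₁ is a nice caterpillar. Then there is a flip sequence between T₁ and T₂ of length at most (3/2) n. -/

import Mathlib

open Finset

/-- An edge (chord) on `n` points in convex position, as an unordered pair of indices. -/
abbrev Edge (n : ℕ) := Sym2 (Fin n)

/-- The cyclic successor of a point. -/
def next {n : ℕ} (i : Fin n) : Fin n := ⟨((i : ℕ) + 1) % n, Nat.mod_lt _ i.pos⟩


/-- Chords `{a,b}` (with `a<b`) and `{c,d}` (with `c<d`) cross iff
`a<c<b<d` or `c<a<d<b`. -/
def Cross {n : ℕ} (e f : Edge n) : Prop :=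
  ∃ a b c d : Fin n, e = s(a, b) ∧ f = s(c, d) ∧ a < b ∧ c < d ∧
    ((a < c ∧ c < b ∧ b < d) ∨ (c < a ∧ a < d ∧ d < b))

/-- A set of chords is non-crossing if no two of its chords cross. -/
def NonCrossing {n : ℕ} (E : Finset (Edge n)) : Prop :=
  ∀ e ∈ E, ∀ f ∈ E, ¬ Cross e f

/-- A border edge joins two cyclically consecutive points (this includes `{n-1, 0}`,
i.e. `{v_n, v_1}`, since addition in `Fin n` wraps around). -/
def IsBorder {n : ℕ} (e : Edge n) : Prop := ∃ i : Fin n, e = s(i, next i)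

/-- A spanning tree on the `n` points, given by its edge set: loopless, connected,
with `n - 1` edges. -/
def IsSpanningTree {n : ℕ} (T : Finset (Edge n)) : Prop :=
  (SimpleGraph.fromEdgeSet (T : Set (Edge n))).Connected ∧
    T.card = n - 1 ∧ ∀ e ∈ T, ¬ e.IsDiag

/-- A non-crossing spanning tree. -/
def NCST {n : ℕ} (T : Finset (Edge n)) : Prop := IsSpanningTree T ∧ NonCrossing T

/-- A flip removes one edge and adds another so that the result is again a
non-crossing spanning tree. -/
def Flip {n : ℕ} (T T' : Finset (Edge n)) : Prop :=
  NCST T ∧ NCST T' ∧ ∃ e ∈ T, ∃ f, f ∉ T ∧ T' = insert f (T.erase e)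

/-- A flip sequence of length `k` from `T₁` to `T₂`. -/
def FlipSeq {n : ℕ} (T₁ T₂ : Finset (Edge n)) (k : ℕ) : Prop :=
  ∃ f : ℕ → Finset (Edge n), f 0 = T₁ ∧ f k = T₂ ∧ ∀ i < k, Flip (f i) (f (i + 1))

/-- There is a flip sequence from `T₁` to `T₂` of length at most `m`. -/
def FlipDistLE {n : ℕ} (T₁ T₂ : Finset (Edge n)) (m : ℕ) : Prop :=
  ∃ k ≤ m, FlipSeq T₁ T₂ k

open scoped Classical in
/-- Degree of a vertex in an edge set. -/
noncomputable def degree {n : ℕ} (T : Finset (Edge n)) (v : Fin n) : ℕ :=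
  (T.filter (fun e => v ∈ e)).card

/-- An internal node is a non-leaf, i.e. a vertex of degree at least 2. -/
def Internal {n : ℕ} (T : Finset (Edge n)) (v : Fin n) : Prop := 2 ≤ degree T v

/-- A caterpillar: the internal nodes induce a path. -/
def IsCaterpillar {n : ℕ} (T : Finset (Edge n)) : Prop :=
  ∃ l : List (Fin n), l.Nodup ∧ (∀ v : Fin n, Internal T v ↔ v ∈ l) ∧
    ∀ (i : ℕ) (h : i + 1 < l.length),
      s(l.get ⟨i, by omega⟩, l.get ⟨i + 1, h⟩) ∈ T

/-- The chord `{v,w}` separates `u` from `x`: exactly one of `u, x` lies strictly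
inside the arc cut off by the chord. -/
def Separates {n : ℕ} (v w u x : Fin n) : Prop :=
  Xor' (min v w < u ∧ u < max v w) (min v w < x ∧ x < max v w)

/-- A nice caterpillar: for every path `u-v-w-x` on four distinct vertices with `v, w`
internal, the chord `{v,w}` separates `u` from `x`. -/
def NiceCaterpillar {n : ℕ} (T : Finset (Edge n)) : Prop :=
  IsCaterpillar T ∧
    ∀ u v w x : Fin n, [u, v, w, x].Nodup →
      s(u, v) ∈ T → s(v, w) ∈ T → s(w, x) ∈ T →
      Internal T v → Internal T w → Separates v w u x

/-!
Number the points `0, …, N` and call the space between `g` and `g + 1` the gap `g`. Assigning to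
every gap the shortest edge covering it matches the `N` gaps of a non-crossing spanning tree with
its `N` edges, and a flip moves the edge of a single gap. In a nice caterpillar, rotated so that
`{0, N}` is an edge, all edges cover one common gap and are therefore nested.

To reach the target tree, move some gaps directly to their new edges and send the others through
their border edge, which costs one more flip for each of them whose target is not a border edge.
If the direct moves run from the shortest edge to the longest, they can include every gap whose
target edge lies inside its old one. If they run from the longest to the shortest, they can include
every gap whose target edge starts or ends at the gap and does not lie inside the old one. In the
two schedules together, the number of extra flips is at most the number of target edges that are
not border edges plus the number of target edges extending beyond their gap on both sides. Each
edge of the latter kind is compensated by a border edge of the target, so this is at most `N`, and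
the cheaper schedule takes at most `3 * N / 2` flips.
-/

variable {n N : ℕ}

/-! ### Flip sequences -/

theorem FlipSeq.refl (T : Finset (Edge n)) : FlipSeq T T 0 :=
  ⟨fun _ => T, rfl, rfl, fun _ hi => absurd hi (Nat.not_lt_zero _)⟩

theorem FlipSeq.trans {T U W : Finset (Edge n)} {k l : ℕ} (hTU : FlipSeq T U k)
    (hUW : FlipSeq U W l) : FlipSeq T W (k + l) := by
  obtain ⟨f, rfl, hfk, hf⟩ := hTU
  obtain ⟨g, hg₀, rfl, hg⟩ := hUW
  refine ⟨fun i => if i < k then f i else g (i - k), ?_, by simp, fun i hi => ?_⟩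
  · rcases Nat.eq_zero_or_pos k with rfl | hk
    · simpa using hg₀.trans hfk.symm
    · simp [hk]
  · rcases lt_trichotomy (i + 1) k with hlt | rfl | hlt
    · simpa [hlt, Nat.lt_of_succ_lt hlt] using hf i (by omega)
    · simpa [hg₀, ← hfk] using hf i (by omega)
    · simpa [show ¬ i < k by omega, show ¬ i + 1 < k by omega,
        show i + 1 - k = i - k + 1 by omega] using hg (i - k) (by omega)

theorem Flip.flipSeq {T U : Finset (Edge n)} (h : Flip T U) : FlipSeq T U 1 :=
  ⟨fun i => if i = 0 then T else U, by simp, by simp, fun i hi => by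
    simpa [Nat.lt_one_iff.1 hi] using h⟩

theorem FlipDistLE.refl (T : Finset (Edge n)) : FlipDistLE T T 0 :=
  ⟨0, le_rfl, .refl T⟩

theorem FlipDistLE.trans {T U W : Finset (Edge n)} {k l : ℕ} (hTU : FlipDistLE T U k)
    (hUW : FlipDistLE U W l) : FlipDistLE T W (k + l) := by
  obtain ⟨i, hi, hTU⟩ := hTU
  obtain ⟨j, hj, hUW⟩ := hUW
  exact ⟨i + j, add_le_add hi hj, hTU.trans hUW⟩

theorem Flip.flipDistLE {T U : Finset (Edge n)} (h : Flip T U) : FlipDistLE T U 1 :=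
  ⟨1, le_rfl, h.flipSeq⟩

theorem FlipDistLE.mono {T U : Finset (Edge n)} {k l : ℕ} (h : FlipDistLE T U k) (hkl : k ≤ l) :
    FlipDistLE T U l :=
  let ⟨i, hi, hTU⟩ := h
  ⟨i, hi.trans hkl, hTU⟩

/-! ### Zigzags -/

theorem cross_mk_iff {a b c d : Fin n} : Cross s(a, b) s(c, d) ↔
    (a < c ∧ c < b ∨ b < c ∧ c < a) ∧ (d < a ∧ d < b ∨ a < d ∧ b < d) ∨
    (a < d ∧ d < b ∨ b < d ∧ d < a) ∧ (c < a ∧ c < b ∨ a < c ∧ b < c) := by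
  constructor
  · rintro ⟨a', b', c', d', hab, hcd, h⟩
    rcases Sym2.eq_iff.1 hab with ⟨rfl, rfl⟩ | ⟨rfl, rfl⟩ <;>
      rcases Sym2.eq_iff.1 hcd with ⟨rfl, rfl⟩ | ⟨rfl, rfl⟩ <;> omega
  · intro h
    rcases lt_or_ge a b with hab | hab <;> rcases lt_or_ge c d with hcd | hcd
    · exact ⟨a, b, c, d, rfl, rfl, by omega⟩
    · exact ⟨a, b, d, c, rfl, Sym2.eq_swap, by omega⟩
    · exact ⟨b, a, c, d, Sym2.eq_swap, rfl, by omega⟩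
    · exact ⟨b, a, d, c, Sym2.eq_swap, Sym2.eq_swap, by omega⟩

/-- A set of edges is a zigzag if the middle edge of every path `u - v - w - x` in it crosses
the chord `{u, x}`. -/
def IsZigzag (T : Finset (Edge n)) : Prop :=
  ∀ u v w x : Fin n, [u, v, w, x].Nodup →
    s(u, v) ∈ T → s(v, w) ∈ T → s(w, x) ∈ T → Cross s(v, w) s(u, x)

theorem internal_of_mem_of_mem {T : Finset (Edge n)} {u v w : Fin n} (huv : s(u, v) ∈ T)
    (hvw : s(v, w) ∈ T) (huw : u ≠ w) : Internal T v := by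
  have hne : s(u, v) ≠ s(v, w) := by
    rw [Sym2.eq_swap, Ne, Sym2.congr_right]
    exact huw
  rw [Internal, degree, Nat.succ_le_iff, Finset.one_lt_card]
  exact ⟨_, by simp [huv], _, by simp [hvw], hne⟩

theorem Separates.cross {v w u x : Fin n} (h : Separates v w u x) (hd : [u, v, w, x].Nodup) :
    Cross s(v, w) s(u, x) := by
  simp only [List.nodup_cons, List.mem_cons, List.not_mem_nil, or_false, not_or] at hd
  have h' := xor_def.1 h
  rw [cross_mk_iff]
  rcases le_total v w with hvw | hvw <;>
    simp only [min_eq_left, min_eq_right, max_eq_left, max_eq_right, hvw] at h' <;> omega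

theorem NiceCaterpillar.isZigzag {T : Finset (Edge n)} (h : NiceCaterpillar T) : IsZigzag T := by
  intro u v w x hd huv hvw hwx
  have hd' := hd
  simp only [List.nodup_cons, List.mem_cons, List.not_mem_nil, or_false, not_or] at hd'
  exact (h.2 u v w x hd huv hvw hwx (internal_of_mem_of_mem huv hvw hd'.1.2.1)
    (internal_of_mem_of_mem hvw hwx hd'.2.1.2)).cross hd

/-! ### Gap assignments -/

/-- A chord on `N + 1` points, given by its endpoints in increasing order. -/
@[ext]
structure Arc (N : ℕ) where
  /-- The smaller endpoint. -/
  left : Fin (N + 1)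
  /-- The larger endpoint. -/
  right : Fin (N + 1)
  left_lt_right : left < right
  deriving DecidableEq

namespace Arc

variable {I J : Arc N} {g h : Fin N}

/-- The underlying unordered edge. -/
def chord (I : Arc N) : Edge (N + 1) := s(I.left, I.right)

/-- The number of gaps covered by the arc. -/
def length (I : Arc N) : ℕ := I.right - I.left

/-- The arc `I` covers the gap `g` between the consecutive points `g` and `g + 1`. -/
def Covers (I : Arc N) (g : Fin N) : Prop := (I.left : ℕ) ≤ g ∧ (g : ℕ) < I.right

/-- The border edge spanning the gap `g`. -/
def border (g : Fin N) : Arc N := ⟨g.castSucc, g.succ, Fin.castSucc_lt_succ⟩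

/-- Arcs are ordered by inclusion. -/
instance : LE (Arc N) := ⟨fun I J => J.left ≤ I.left ∧ I.right ≤ J.right⟩

instance : DecidableLE (Arc N) := fun _ _ => instDecidableAnd

theorem le_def : I ≤ J ↔ J.left ≤ I.left ∧ I.right ≤ J.right := Iff.rfl

theorem Covers.mono (hIJ : I ≤ J) (hI : I.Covers g) : J.Covers g :=
  ⟨le_trans hIJ.1 hI.1, lt_of_lt_of_le hI.2 hIJ.2⟩

theorem chord_injective : Function.Injective (chord (N := N)) := by
  intro I J h
  have hI := I.left_lt_right
  have hJ := J.left_lt_right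
  rcases Sym2.eq_iff.1 h with ⟨hl, hr⟩ | ⟨hl, hr⟩
  · exact Arc.ext hl hr
  · omega

theorem not_isDiag_chord (I : Arc N) : ¬ I.chord.IsDiag :=
  Sym2.mk_isDiag_iff.not.2 I.left_lt_right.ne

theorem cross_chord_iff : Cross I.chord J.chord ↔
    I.left < J.left ∧ J.left < I.right ∧ I.right < J.right ∨
      J.left < I.left ∧ I.left < J.right ∧ J.right < I.right := by
  have hI := I.left_lt_right
  have hJ := J.left_lt_right
  rw [chord, chord, cross_mk_iff]
  omega

/-- Arcs `I` and `J` assigned to the gaps `g` and `h` are compatible if they do not cross and do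
not cover each other's gaps. -/
def Compatible (g : Fin N) (I : Arc N) (h : Fin N) (J : Arc N) : Prop :=
  ¬ Cross I.chord J.chord ∧ ¬ (I.Covers h ∧ J.Covers g)

theorem compatible_iff : Compatible g I h J ↔
    ¬ (I.left < J.left ∧ J.left < I.right ∧ I.right < J.right ∨
      J.left < I.left ∧ I.left < J.right ∧ J.right < I.right) ∧
    ¬ (((I.left : ℕ) ≤ h ∧ (h : ℕ) < I.right) ∧ (J.left : ℕ) ≤ g ∧ (g : ℕ) < J.right) := by
  rw [Compatible, cross_chord_iff, Covers, Covers]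

theorem Compatible.symm (H : Compatible g I h J) : Compatible h J g I := by
  rw [compatible_iff] at H ⊢
  omega

theorem covers_border (g : Fin N) : (border g).Covers g :=
  ⟨le_rfl, Nat.lt_succ_self _⟩

theorem compatible_border (hgh : g ≠ h) (hJ : J.Covers h) : Compatible g (border g) h J := by
  have hgh := Fin.val_ne_iff.2 hgh
  rw [Covers] at hJ
  simp only [compatible_iff, border, Fin.lt_def, Fin.val_castSucc, Fin.val_succ]
  omega

theorem compatible_of_le (hIJ : I ≤ J) (hI : ¬ I.Covers h) : Compatible g I h J := by
  rw [Covers] at hI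
  rw [le_def] at hIJ
  rw [compatible_iff]
  omega

end Arc

open Arc

/-- The edge set formed by a family of arcs indexed by the gaps. -/
def gapTree (G : Fin N → Arc N) : Finset (Edge (N + 1)) := univ.image fun g => (G g).chord

/-- An assignment of pairwise non-crossing arcs to the gaps such that every gap is covered by its
arc and no two arcs cover each other's gaps. It encodes a non-crossing spanning tree together with
the labelling of its edges in which each gap receives the shortest edge covering it. -/
structure IsGapAssignment (G : Fin N → Arc N) : Prop where
  covers : ∀ g, (G g).Covers g
  compatible : Pairwise fun g h => Compatible g (G g) h (G h)

theorem mem_gapTree {G : Fin N → Arc N} {e : Edge (N + 1)} :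
    e ∈ gapTree G ↔ ∃ g, (G g).chord = e := by
  simp [gapTree]

theorem reachable_of_forall_gap {Γ : SimpleGraph (Fin (N + 1))} {a b : Fin (N + 1)} (hab : a ≤ b)
    (h : ∀ g : Fin N, (a : ℕ) ≤ g → (g : ℕ) < b → Γ.Reachable g.castSucc g.succ) :
    Γ.Reachable a b := by
  induction b using Fin.induction with
  | zero => rw [Fin.le_zero_iff.1 hab]
  | succ i ih =>
    rcases hab.eq_or_lt with rfl | hlt
    · exact .rfl
    · have hai : a ≤ i.castSucc := Fin.le_castSucc_iff.2 hlt
      exact (ih hai fun g hg hgi => h g hg (hgi.trans (Nat.lt_succ_self _))).trans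
        (h i hai (Nat.lt_succ_self _))

namespace IsGapAssignment

variable {G : Fin N → Arc N} {g h : Fin N}

theorem nested (hG : IsGapAssignment G) (hgh : g ≠ h) (hc : (G g).Covers h) :
    G h ≤ G g ∧ ¬ (G h).Covers g := by
  have hcompat := compatible_iff.1 (hG.compatible hgh)
  have hg := hG.covers g
  have hh := hG.covers h
  simp only [Covers, le_def] at hc hg hh ⊢
  omega

theorem length_lt (hG : IsGapAssignment G) (hgh : g ≠ h) (hc : (G g).Covers h) :
    (G h).length < (G g).length := by
  have hnest := hG.nested hgh hc
  have hg := hG.covers g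
  have hlt := (G h).left_lt_right
  have hne : (G h).left ≠ (G g).left ∨ (G h).right ≠ (G g).right := by
    simp only [Covers, le_def] at *
    omega
  simp only [length, le_def] at hnest ⊢
  omega

theorem injective (hG : IsGapAssignment G) : Function.Injective G := by
  intro g h hgh
  by_contra hne
  exact (hG.nested hne (hgh ▸ hG.covers h)).2 (hgh ▸ hG.covers g)

theorem chord_injective (hG : IsGapAssignment G) : Function.Injective fun g => (G g).chord :=
  Arc.chord_injective.comp hG.injective

theorem card_gapTree (hG : IsGapAssignment G) : #(gapTree G) = N := by
  rw [gapTree, card_image_of_injective _ hG.chord_injective, card_univ, Fintype.card_fin]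

theorem reachable_gap (hG : IsGapAssignment G) (g : Fin N) :
    (SimpleGraph.fromEdgeSet (gapTree G : Set (Edge (N + 1)))).Reachable g.castSucc g.succ := by
  induction hk : (G g).length using Nat.strong_induction_on generalizing g with | _ k ih =>
  have hcov := hG.covers g
  have hedge : (SimpleGraph.fromEdgeSet (gapTree G : Set (Edge (N + 1)))).Adj
      (G g).left (G g).right := by
    rw [SimpleGraph.fromEdgeSet_adj]
    exact ⟨mem_gapTree.2 ⟨g, rfl⟩, (G g).left_lt_right.ne⟩
  have hinner : ∀ h : Fin N, g ≠ h → (G g).Covers h →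
      (SimpleGraph.fromEdgeSet (gapTree G : Set (Edge (N + 1)))).Reachable h.castSucc h.succ :=
    fun h hgh hc => ih _ (hk ▸ hG.length_lt hgh hc) h rfl
  have hleft := reachable_of_forall_gap (a := (G g).left) (b := g.castSucc) hcov.1
    fun h hl hr => hinner h (Fin.ne_of_gt hr) ⟨hl, hr.trans hcov.2⟩
  have hright := reachable_of_forall_gap (a := g.succ) (b := (G g).right) hcov.2
    fun h hl hr => hinner h (Fin.ne_of_lt hl) ⟨hcov.1.trans (Nat.le_of_lt hl), hr⟩
  exact hleft.symm.trans (hedge.reachable.trans hright.symm)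

theorem ncst (hG : IsGapAssignment G) : NCST (gapTree G) := by
  refine ⟨⟨⟨fun a b => ?_⟩, hG.card_gapTree, fun e he => ?_⟩, fun e he f hf => ?_⟩
  · rcases le_total a b with hab | hab
    · exact reachable_of_forall_gap hab fun g _ _ => hG.reachable_gap g
    · exact (reachable_of_forall_gap hab fun g _ _ => hG.reachable_gap g).symm
  · obtain ⟨g, rfl⟩ := mem_gapTree.1 he
    exact (G g).not_isDiag_chord
  · obtain ⟨g, rfl⟩ := mem_gapTree.1 he
    obtain ⟨h, rfl⟩ := mem_gapTree.1 hf
    rcases eq_or_ne g h with rfl | hgh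
    · rw [cross_chord_iff]
      omega
    · exact (hG.compatible hgh).1

end IsGapAssignment

theorem exists_mem_of_connected_fromEdgeSet {V : Type*} {E : Set (Sym2 V)}
    (hE : (SimpleGraph.fromEdgeSet E).Connected) {S : Set V} {u v : V} (hu : u ∈ S) (hv : v ∉ S) :
    ∃ a ∈ S, ∃ b ∉ S, s(a, b) ∈ E := by
  obtain ⟨p⟩ := hE.preconnected u v
  obtain ⟨d, -, hfst, hsnd⟩ := p.exists_boundary_dart S hu hv
  exact ⟨d.fst, hfst, d.snd, hsnd, ((SimpleGraph.fromEdgeSet_adj _).1 d.adj).1⟩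

/-- `I` is a shortest edge of `T` covering the gap `g`. -/
def IsShortestCover (T : Finset (Edge (N + 1))) (g : Fin N) (I : Arc N) : Prop :=
  MinimalFor (fun J : Arc N => J.chord ∈ T ∧ J.Covers g) length I

namespace NCST

variable {T : Finset (Edge (N + 1))} {I J : Arc N} {g h : Fin N}

theorem exists_covers (hT : NCST T) (g : Fin N) : ∃ I : Arc N, I.chord ∈ T ∧ I.Covers g := by
  obtain ⟨a, ha, b, hb, hab⟩ := exists_mem_of_connected_fromEdgeSet hT.1.1 (S := Set.Iic g.castSucc)
    (u := g.castSucc) (v := g.succ) Set.self_mem_Iic (by simp)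
  rw [Set.mem_Iic] at ha hb
  exact ⟨⟨a, b, ha.trans_lt (not_le.1 hb)⟩, hab, ha, not_le.1 hb⟩

theorem exists_isShortestCover (hT : NCST T) (g : Fin N) : ∃ I : Arc N, IsShortestCover T g I :=
  exists_minimalFor_of_wellFoundedLT _ _ (hT.exists_covers g)

theorem not_covers_of_isShortestCover_of_lt (hT : NCST T) (hgh : g < h)
    (hI : IsShortestCover T g I) (hJ : IsShortestCover T h J) : ¬ (I.Covers h ∧ J.Covers g) := by
  rintro ⟨hIh, hJg⟩
  -- An edge leaving `{g + 1, …, h}` covers one of `g` and `h` and is shorter than `I` or `J`.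
  obtain ⟨a, ⟨hga, hah⟩, b, hb, hab⟩ := exists_mem_of_connected_fromEdgeSet hT.1.1
    (S := Set.Ioc g.castSucc h.castSucc) (u := h.castSucc) (v := g.castSucc)
    ⟨hgh, le_rfl⟩ (by simp)
  rw [Set.mem_Ioc] at hb
  have hIg := hI.prop.2
  have hJh := hJ.prop.2
  simp only [Covers] at hIg hIh hJg hJh
  rw [Fin.lt_def, Fin.val_castSucc] at hga
  rw [Fin.le_def, Fin.val_castSucc] at hah
  rcases le_or_gt b g.castSucc with hbg | hbg
  · let K : Arc N := ⟨b, a, hbg.trans_lt hga⟩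
    have hK : K.chord ∈ T := by rwa [chord, Sym2.eq_swap]
    have hlen := hI.le_of_le ⟨hK, hbg, hga⟩
    have hcross := cross_chord_iff.not.1 (hT.2 _ hK _ hI.prop.1)
    simp only [length, K, Fin.le_def, Fin.val_castSucc] at hlen hcross hbg
    omega
  · have hhb : h.castSucc < b := not_le.1 fun hbh => hb ⟨hbg, hbh⟩
    let K : Arc N := ⟨a, b, lt_of_le_of_lt hah hhb⟩
    have hlen := hJ.le_of_le (j := K) ⟨hab, hah, hhb⟩
    have hcross := cross_chord_iff.not.1 (hT.2 K.chord hab _ hJ.prop.1)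
    simp only [length, K, Fin.lt_def, Fin.val_castSucc] at hlen hcross hhb
    omega

theorem compatible_of_isShortestCover (hT : NCST T) (hgh : g ≠ h)
    (hI : IsShortestCover T g I) (hJ : IsShortestCover T h J) : Compatible g I h J := by
  refine ⟨hT.2 _ hI.prop.1 _ hJ.prop.1, ?_⟩
  rcases lt_or_gt_of_ne hgh with hlt | hlt
  · exact hT.not_covers_of_isShortestCover_of_lt hlt hI hJ
  · exact fun hc => hT.not_covers_of_isShortestCover_of_lt hlt hJ hI hc.symm

theorem exists_isGapAssignment (hT : NCST T) :
    ∃ G : Fin N → Arc N, IsGapAssignment G ∧ gapTree G = T := by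
  choose G hG using hT.exists_isShortestCover
  have hGap : IsGapAssignment G :=
    ⟨fun g => (hG g).prop.2, fun g h hgh => hT.compatible_of_isShortestCover hgh (hG g) (hG h)⟩
  refine ⟨G, hGap, eq_of_subset_of_card_le (fun e he => ?_) ?_⟩
  · obtain ⟨g, rfl⟩ := mem_gapTree.1 he
    exact (hG g).prop.1
  · rw [hT.1.2.1, hGap.card_gapTree, Nat.add_sub_cancel]

end NCST

/-! ### Sweeping one gap assignment into another -/

namespace IsGapAssignment

variable {F G : Fin N → Arc N} {g : Fin N} {I : Arc N}

theorem update (hG : IsGapAssignment G) (hI : I.Covers g)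
    (hc : ∀ h ≠ g, Compatible g I h (G h)) : IsGapAssignment (Function.update G g I) := by
  constructor
  · intro h
    rcases eq_or_ne h g with rfl | hh
    · simpa using hI
    · simpa [hh] using hG.covers h
  · intro h k hhk
    rcases eq_or_ne h g with rfl | hh
    · simpa [hhk.symm] using hc k hhk.symm
    · rcases eq_or_ne k g with rfl | hk
      · simpa [hh] using (hc h hh).symm
      · simpa [hh, hk] using hG.compatible hhk

theorem flip_update (hG : IsGapAssignment G) (hI : I.Covers g)
    (hc : ∀ h ≠ g, Compatible g I h (G h)) (hne : I ≠ G g) :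
    Flip (gapTree G) (gapTree (Function.update G g I)) := by
  have hupdate := hG.update hI hc
  refine ⟨hG.ncst, hupdate.ncst, (G g).chord, mem_gapTree.2 ⟨g, rfl⟩, I.chord, ?_, ?_⟩
  · rw [mem_gapTree]
    rintro ⟨h, hh⟩
    have hhI : G h = I := Arc.chord_injective hh
    have hhg : h ≠ g := by
      rintro rfl
      exact hne hhI.symm
    exact hhg (hupdate.injective (by simp [hhg, hhI]))
  · ext e
    rw [mem_insert, mem_erase, mem_gapTree, mem_gapTree]
    constructor
    · rintro ⟨h, rfl⟩
      rcases eq_or_ne h g with rfl | hhg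
      · simp
      · exact .inr ⟨by simpa [hhg] using hG.chord_injective.ne hhg, h, by simp [hhg]⟩
    · rintro (rfl | ⟨he, h, rfl⟩)
      · exact ⟨g, by simp⟩
      · have hhg : h ≠ g := by
          rintro rfl
          exact he rfl
        exact ⟨h, by simp [hhg]⟩

theorem flipDistLE_of_sweep {α : Type*} [LinearOrder α] {ρ : Fin N → α}
    (hρ : Function.Injective ρ) (hF : IsGapAssignment F) (hG : IsGapAssignment G)
    (hFG : ∀ g h, F g ≠ G g → F h ≠ G h → ρ g < ρ h → Compatible g (G g) h (F h)) :
    FlipDistLE (gapTree F) (gapTree G) #{g | F g ≠ G g} := by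
  induction hk : #{g | F g ≠ G g} generalizing F with
  | zero =>
    obtain rfl : F = G := by simpa [filter_eq_empty_iff, funext_iff] using hk
    exact .refl _
  | succ k ih =>
    obtain ⟨g, hg, hmin⟩ := exists_min_image {g | F g ≠ G g} ρ (card_pos.1 (by omega))
    rw [mem_filter_univ] at hg
    have hcompat : ∀ h ≠ g, Compatible g (G g) h (F h) := by
      intro h hhg
      by_cases hh : F h = G h
      · exact hh ▸ hG.compatible hhg.symm
      · exact hFG g h hg hh ((hmin h (by simpa using hh)).lt_of_ne (hρ.ne hhg.symm))
    have hdiff : ∀ h, Function.update F g (G g) h ≠ G h ↔ h ≠ g ∧ F h ≠ G h := by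
      intro h
      rcases eq_or_ne h g with rfl | hhg <;> simp [*]
    have hrest : FlipDistLE (gapTree (Function.update F g (G g))) (gapTree G) k := by
      refine ih (hF.update (hG.covers g) hcompat) (fun h₁ h₂ hh₁ hh₂ hlt => ?_) ?_
      · rw [hdiff] at hh₁ hh₂
        simpa [hh₂.1] using hFG h₁ h₂ hh₁.2 hh₂.2 hlt
      · have herase : ({h | Function.update F g (G g) h ≠ G h} : Finset (Fin N)) =
            ({h | F h ≠ G h} : Finset (Fin N)).erase g := by
          ext h
          simp [hdiff]
        rw [herase, card_erase_of_mem (by simpa using hg), hk, Nat.add_sub_cancel]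
    exact ((hF.flip_update (hG.covers g) hcompat hg.symm).flipDistLE.trans hrest).mono (by omega)

theorem piecewise_border (hG : IsGapAssignment G) (A : Finset (Fin N)) :
    IsGapAssignment (A.piecewise G border) := by
  have hcov : ∀ g, (A.piecewise G border g).Covers g := fun g => by
    by_cases hg : g ∈ A <;> simp [hg, hG.covers g, covers_border]
  refine ⟨hcov, fun g h hgh => ?_⟩
  by_cases hg : g ∈ A
  · by_cases hh : h ∈ A
    · simpa [hg, hh] using hG.compatible hgh
    · simpa [hg, hh] using (compatible_border hgh.symm (hG.covers g)).symm
  · simpa [hg] using compatible_border hgh (hcov h)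

theorem flipDistLE_piecewise_border (hF : IsGapAssignment F) (A : Finset (Fin N)) :
    FlipDistLE (gapTree F) (gapTree (A.piecewise F border)) #Aᶜ := by
  refine (flipDistLE_of_sweep Function.injective_id hF (hF.piecewise_border A) ?_).mono
    (card_le_card fun g hg => ?_)
  · intro g h hg _ hlt
    have hgA : g ∉ A := fun hgA => by simp [hgA] at hg
    simpa [hgA] using compatible_border hlt.ne (hF.covers h)
  · rw [mem_compl]
    exact fun hgA => by simp [hgA] at hg

theorem piecewise_border_flipDistLE (hG : IsGapAssignment G) (A : Finset (Fin N)) :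
    FlipDistLE (gapTree (A.piecewise G border)) (gapTree G) #{g | g ∉ A ∧ G g ≠ border g} := by
  refine (flipDistLE_of_sweep Function.injective_id (hG.piecewise_border A) hG ?_).mono
    (card_le_card fun g hg => ?_)
  · intro g h _ hh hlt
    have hhA : h ∉ A := fun hhA => by simp [hhA] at hh
    simpa [hhA] using (compatible_border (Fin.ne_of_gt hlt) (hG.covers g)).symm
  · rw [mem_filter_univ] at hg ⊢
    have hgA : g ∉ A := fun hgA => by simp [hgA] at hg
    exact ⟨hgA, fun hb => by simp [hgA, hb] at hg⟩

/-- The gaps outside `A` are parked at their border edges, where they obstruct nothing, while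
those in `A` are moved directly from `F` to `G` in the order given by `ρ`. -/
theorem flipDistLE_via_border {α : Type*} [LinearOrder α] {ρ : Fin N → α}
    (hρ : Function.Injective ρ) (hF : IsGapAssignment F) (hG : IsGapAssignment G)
    (A : Finset (Fin N))
    (hFG : ∀ g ∈ A, ∀ h ∈ A, ρ g < ρ h → Compatible g (G g) h (F h)) :
    FlipDistLE (gapTree F) (gapTree G) (N + #{g | g ∉ A ∧ G g ≠ border g}) := by
  have hmem : ∀ g, A.piecewise F border g ≠ A.piecewise G border g → g ∈ A := fun g hg => by
    by_contra hgA
    simp [hgA] at hg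
  have hsweep : FlipDistLE (gapTree (A.piecewise F border)) (gapTree (A.piecewise G border)) #A :=
    (flipDistLE_of_sweep hρ (hF.piecewise_border A) (hG.piecewise_border A)
      fun g h hg hh hlt => by simpa [hmem g hg, hmem h hh] using hFG g (hmem g hg) h (hmem h hh) hlt
      ).mono (card_le_card fun g hg => hmem g (by simpa using hg))
  refine (((hF.flipDistLE_piecewise_border A).trans hsweep).trans
    (hG.piecewise_border_flipDistLE A)).mono ?_
  rw [card_compl_add_card, Fintype.card_fin]

theorem exists_left_eq_castSucc (hG : IsGapAssignment G) (hg : (G g).right ≠ g.succ) :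
    ∃ h : Fin N, h.castSucc = g.succ ∧ (G h).left = h.castSucc := by
  have hcov := hG.covers g
  rw [Ne, Fin.ext_iff, Fin.val_succ] at hg
  let h : Fin N := ⟨g + 1, by rw [Covers] at hcov; omega⟩
  have hnest := hG.nested (g := g) (h := h) (Fin.ne_of_lt (Nat.lt_succ_self g))
    (by simp only [Covers, h] at hcov ⊢; omega)
  have hh := hG.covers h
  refine ⟨h, rfl, Fin.ext ?_⟩
  simp only [Covers, le_def, h, Fin.val_castSucc] at hcov hnest hh ⊢
  omega

theorem card_wide_lt_card_border (hG : IsGapAssignment G) (hN : 0 < N) :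
    #{g | (G g).left ≠ g.castSucc ∧ (G g).right ≠ g.succ} < #{g | G g = border g} := by
  set L : Finset (Fin N) := {g | (G g).left = g.castSucc} with hL
  set R : Finset (Fin N) := {g | (G g).right ≠ g.succ} with hR
  have hRL : R.image Fin.succ ⊂ L.image Fin.castSucc := by
    refine (ssubset_iff_of_subset fun i hi => ?_).2 ⟨(⟨0, hN⟩ : Fin N).castSucc, ?_, ?_⟩
    · obtain ⟨g, hg, rfl⟩ := mem_image.1 hi
      obtain ⟨h, hh, hleft⟩ := hG.exists_left_eq_castSucc (g := g) (by simpa [hR] using hg)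
      exact hh ▸ mem_image_of_mem _ (by simpa [hL] using hleft)
    · have hcov := (hG.covers ⟨0, hN⟩).1
      exact mem_image_of_mem _ ((mem_filter_univ _).2 (Fin.le_antisymm hcov (Fin.zero_le _)))
    · simp [Fin.ext_iff]
  have hcard : #R < #L := by
    simpa [card_image_of_injective, Fin.succ_injective, Fin.castSucc_injective] using
      card_lt_card hRL
  have hwide : ({g | (G g).left ≠ g.castSucc ∧ (G g).right ≠ g.succ} : Finset (Fin N)) = R \ L := by
    ext g
    simp [hL, hR, and_comm]
  have hborder : ({g | G g = border g} : Finset (Fin N)) = L \ R := by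
    ext g
    simp [hL, hR, Arc.ext_iff, border]
  have hRsum := card_sdiff_add_card_inter R L
  have hLsum := card_sdiff_add_card_inter L R
  rw [inter_comm] at hLsum
  rw [hwide, hborder]
  omega

end IsGapAssignment

/-! ### Trees whose edges cover a common gap -/

namespace IsGapAssignment

variable {F G : Fin N → Arc N} {c g h : Fin N} {I : Arc N}

theorem nested_of_length_lt (hF : IsGapAssignment F) (hc : ∀ g, (F g).Covers c)
    (hlt : (F g).length < (F h).length) : F g ≤ F h ∧ ¬ (F g).Covers h := by
  have hgh : g ≠ h := by
    rintro rfl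
    exact hlt.false
  have hcompat := compatible_iff.1 (hF.compatible hgh)
  have hgc := hc g
  have hhc := hc h
  have hg := hF.covers g
  simp only [Covers, length, le_def] at *
  omega

theorem length_comp_injective (hF : IsGapAssignment F) (hc : ∀ g, (F g).Covers c) :
    Function.Injective (length ∘ F) := by
  intro g h hlen
  by_contra hgh
  have hcompat := compatible_iff.1 (hF.compatible hgh)
  have hgc := hc g
  have hhc := hc h
  have hg := hF.covers g
  have hh := hF.covers h
  simp only [Covers, length, Function.comp_apply] at *
  omega

theorem compatible_of_not_le (hF : IsGapAssignment F) (hc : ∀ g, (F g).Covers c)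
    (hI : I.Covers g) (hnear : I.left = g.castSucc ∨ I.right = g.succ) (hnle : ¬ I ≤ F g)
    (hlt : (F h).length < (F g).length) : Compatible g I h (F h) := by
  have hnest := hF.nested_of_length_lt hc hlt
  have hhc := hc h
  have hg := hF.covers g
  have hh := hF.covers h
  rw [Fin.ext_iff, Fin.ext_iff, Fin.val_castSucc, Fin.val_succ] at hnear
  rw [compatible_iff]
  simp only [Covers, le_def] at *
  omega

theorem flipDistLE_increasing (hF : IsGapAssignment F) (hG : IsGapAssignment G)
    (hc : ∀ g, (F g).Covers c) :
    FlipDistLE (gapTree F) (gapTree G) (N + #{g | ¬ G g ≤ F g ∧ G g ≠ border g}) := by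
  have h := hF.flipDistLE_via_border (hF.length_comp_injective hc) hG {g | G g ≤ F g}
    fun g hg h _ hlt => by
      have hle : G g ≤ F g := by simpa using hg
      obtain ⟨hFgh, hFg⟩ := hF.nested_of_length_lt hc hlt
      exact compatible_of_le ⟨hFgh.1.trans hle.1, hle.2.trans hFgh.2⟩
        fun hcov => hFg (hcov.mono hle)
  simpa using h

theorem flipDistLE_decreasing (hF : IsGapAssignment F) (hG : IsGapAssignment G)
    (hc : ∀ g, (F g).Covers c) :
    FlipDistLE (gapTree F) (gapTree G) (N + #{g | ((G g).left ≠ g.castSucc ∧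
      (G g).right ≠ g.succ ∨ G g ≤ F g) ∧ G g ≠ border g}) := by
  have h := hF.flipDistLE_via_border (OrderDual.toDual.injective.comp (hF.length_comp_injective hc))
    hG {g | ((G g).left = g.castSucc ∨ (G g).right = g.succ) ∧ ¬ G g ≤ F g}
    fun g hg h _ hlt => by
      rw [mem_filter_univ] at hg
      exact hF.compatible_of_not_le hc (hG.covers g) hg.1 hg.2 (OrderDual.toDual_lt_toDual.1 hlt)
  simpa [not_and_or, imp_iff_not_or] using h

theorem exists_flipSeq_of_forall_covers (hF : IsGapAssignment F) (hG : IsGapAssignment G)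
    (hc : ∀ g, (F g).Covers c) :
    ∃ k, FlipSeq (gapTree F) (gapTree G) k ∧ 2 * k ≤ 3 * N := by
  obtain ⟨k, hk, hkseq⟩ := hF.flipDistLE_increasing hG hc
  obtain ⟨l, hl, hlseq⟩ := hF.flipDistLE_decreasing hG hc
  have hwide := hG.card_wide_lt_card_border c.pos
  have hborder := card_filter_add_card_filter_not (s := (univ : Finset (Fin N)))
    fun g => G g = border g
  have hsum : #{g | ¬ G g ≤ F g ∧ G g ≠ border g} + #{g | ((G g).left ≠ g.castSucc ∧
      (G g).right ≠ g.succ ∨ G g ≤ F g) ∧ G g ≠ border g} ≤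
      #{g | ¬ G g = border g} + #{g | (G g).left ≠ g.castSucc ∧ (G g).right ≠ g.succ} := by
    rw [← card_union_add_card_inter]
    refine add_le_add (card_le_card fun g => ?_) (card_le_card fun g => ?_) <;>
      simp only [mem_union, mem_inter, mem_filter_univ] <;> tauto
  rw [card_univ, Fintype.card_fin] at hborder
  rcases le_total k l with hkl | hkl
  · exact ⟨k, hkseq, by omega⟩
  · exact ⟨l, hlseq, by omega⟩

end IsGapAssignment

/-! ### The arcs of a zigzag -/

section Zigzag

variable {F : Fin N → Arc N} {g : Fin N}

theorem IsGapAssignment.exists_left_eq_left (hF : IsGapAssignment F)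
    (hg : (F g).left ≠ g.castSucc) :
    ∃ h ≠ g, (F g).Covers h ∧ (F h).left = (F g).left ∧ (F h).right ≤ g.castSucc := by
  have hgcov := hF.covers g
  rw [Ne, Fin.ext_iff, Fin.val_castSucc] at hg
  simp only [Covers] at hgcov
  obtain ⟨h, hh⟩ : ∃ h : Fin N, (h : ℕ) = (F g).left := ⟨⟨(F g).left, by omega⟩, rfl⟩
  have hne : h ≠ g := by omega
  have hcov : (F g).Covers h := ⟨hh.ge, by omega⟩
  have hnest := hF.nested hne.symm hcov
  have hhcov := hF.covers h
  simp only [Covers, le_def] at hnest hhcov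
  refine ⟨h, hne, hcov, by omega, ?_⟩
  rw [Fin.le_def, Fin.val_castSucc]
  omega

theorem IsGapAssignment.exists_right_eq_right (hF : IsGapAssignment F)
    (hg : (F g).right ≠ g.succ) :
    ∃ h ≠ g, (F g).Covers h ∧ (F h).right = (F g).right ∧ g.succ ≤ (F h).left := by
  have hgcov := hF.covers g
  rw [Ne, Fin.ext_iff, Fin.val_succ] at hg
  simp only [Covers] at hgcov
  obtain ⟨h, hh⟩ : ∃ h : Fin N, (h : ℕ) + 1 = (F g).right :=
    ⟨⟨(F g).right - 1, by omega⟩, Nat.sub_add_cancel (by omega)⟩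
  have hne : h ≠ g := by omega
  have hcov : (F g).Covers h := ⟨by omega, by omega⟩
  have hnest := hF.nested hne.symm hcov
  have hhcov := hF.covers h
  simp only [Covers, le_def] at hnest hhcov
  refine ⟨h, hne, hcov, by omega, ?_⟩
  rw [Fin.le_def, Fin.val_succ]
  omega

theorem mk_left_right_mem_gapTree (g : Fin N) : s((F g).left, (F g).right) ∈ gapTree F :=
  mem_gapTree.2 ⟨g, rfl⟩

theorem mk_right_left_mem_gapTree (g : Fin N) : s((F g).right, (F g).left) ∈ gapTree F :=
  Sym2.eq_swap ▸ mk_left_right_mem_gapTree g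

namespace IsZigzag

theorem left_eq_or_right_eq (hZ : IsZigzag (gapTree F)) (hF : IsGapAssignment F)
    (g : Fin N) : (F g).left = g.castSucc ∨ (F g).right = g.succ := by
  by_contra! hwide
  obtain ⟨i, -, -, hil, hir⟩ := hF.exists_left_eq_left hwide.1
  obtain ⟨j, -, -, hjr, hjl⟩ := hF.exists_right_eq_right hwide.2
  have hi := (F i).left_lt_right
  have hj := (F j).left_lt_right
  rw [Fin.le_def, Fin.val_castSucc] at hir
  rw [Fin.le_def, Fin.val_succ] at hjl
  have hcross := hZ (F i).right (F g).left (F g).right (F j).left (by simp; omega)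
    (hil ▸ mk_right_left_mem_gapTree i) (mk_left_right_mem_gapTree g)
    (hjr ▸ mk_right_left_mem_gapTree j)
  rw [cross_mk_iff] at hcross
  omega

theorem exists_left_eq_succ (hZ : IsZigzag (gapTree F)) (hF : IsGapAssignment F)
    (hl : (F g).left = g.castSucc) (hr : (F g).right ≠ g.succ) :
    ∃ h ≠ g, (F g).Covers h ∧ (F h).left = g.succ ∧ (F h).right = (F g).right := by
  obtain ⟨i, hig, hicov, hir, -⟩ := hF.exists_right_eq_right hr
  obtain ⟨h, ⟨hhg, hgh, hhr⟩, hmin⟩ := exists_minimalFor_of_wellFoundedLT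
    (fun h => h ≠ g ∧ (F g).Covers h ∧ (F h).right = (F g).right) (fun h => (F h).left)
    ⟨i, hig, hicov, hir⟩
  refine ⟨h, hhg, hgh, ?_, hhr⟩
  by_contra hne
  -- By minimality, the arc of the gap just before `(F h).left` ends there; it forms a path with
  -- `F h` and `F g` that does not zigzag.
  have hnest := hF.nested hhg.symm hgh
  have hhcov := hF.covers h
  have hgcov := hF.covers g
  simp only [Covers, le_def, Fin.ext_iff, Fin.val_castSucc, Fin.val_succ] at *
  obtain ⟨k, hk⟩ : ∃ k : Fin N, (k : ℕ) + 1 = (F h).left :=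
    ⟨⟨(F h).left - 1, by omega⟩, Nat.sub_add_cancel (by omega)⟩
  have hkg : g ≠ k := by omega
  have hkh : h ≠ k := by omega
  have hkcov := hF.covers k
  have hgk := hF.nested hkg ⟨by omega, by omega⟩
  have hkhc := compatible_iff.1 (hF.compatible hkh)
  have hkmin := hmin (j := k)
  simp only [Covers, le_def] at hkcov hgk
  have hkr : (F k).right = (F h).left := by omega
  have hcross := hZ (F k).left (F h).left (F h).right (F g).left (by simp; omega)
    (hkr ▸ mk_left_right_mem_gapTree k) (mk_left_right_mem_gapTree h)
    (by rw [Fin.ext hhr]; exact mk_right_left_mem_gapTree g)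
  rw [cross_mk_iff] at hcross
  omega

theorem exists_right_eq_castSucc (hZ : IsZigzag (gapTree F)) (hF : IsGapAssignment F)
    (hr : (F g).right = g.succ) (hl : (F g).left ≠ g.castSucc) :
    ∃ h ≠ g, (F g).Covers h ∧ (F h).left = (F g).left ∧ (F h).right = g.castSucc := by
  obtain ⟨i, hig, hicov, hil, -⟩ := hF.exists_left_eq_left hl
  obtain ⟨h, ⟨hhg, hgh, hhl⟩, hmax⟩ := exists_maximalFor_of_wellFoundedGT
    (fun h => h ≠ g ∧ (F g).Covers h ∧ (F h).left = (F g).left) (fun h => (F h).right)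
    ⟨i, hig, hicov, hil⟩
  refine ⟨h, hhg, hgh, hhl, ?_⟩
  by_contra hne
  have hnest := hF.nested hhg.symm hgh
  have hhcov := hF.covers h
  have hgcov := hF.covers g
  simp only [Covers, le_def, Fin.ext_iff, Fin.val_castSucc, Fin.val_succ] at *
  obtain ⟨k, hk⟩ : ∃ k : Fin N, (k : ℕ) = (F h).right := ⟨⟨(F h).right, by omega⟩, rfl⟩
  have hkg : g ≠ k := by omega
  have hkh : h ≠ k := by omega
  have hkcov := hF.covers k
  have hgk := hF.nested hkg ⟨by omega, by omega⟩
  have hkhc := compatible_iff.1 (hF.compatible hkh)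
  have hkmax := hmax (j := k)
  simp only [Covers, le_def] at hkcov hgk
  have hkl : (F k).left = (F h).right := by omega
  have hcross := hZ (F k).right (F h).right (F h).left (F g).right (by simp; omega)
    (hkl ▸ mk_right_left_mem_gapTree k) (mk_right_left_mem_gapTree h)
    (by rw [Fin.ext hhl]; exact mk_left_right_mem_gapTree g)
  rw [cross_mk_iff] at hcross
  omega

theorem exists_covers_of_ne_border (hZ : IsZigzag (gapTree F)) (hF : IsGapAssignment F)
    (hg : F g ≠ border g) :
    ∃ h ≠ g, (F g).Covers h ∧ ∀ k ≠ g, (F g).Covers k → (F h).Covers k := by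
  rcases hZ.left_eq_or_right_eq hF g with hl | hr
  · obtain ⟨h, hhg, hgh, hhl, hhr⟩ := hZ.exists_left_eq_succ hF hl
      fun hr => hg (Arc.ext hl hr)
    refine ⟨h, hhg, hgh, fun k hk hgk => ?_⟩
    simp only [Covers, Fin.ext_iff, Fin.val_castSucc, Fin.val_succ] at *
    omega
  · obtain ⟨h, hhg, hgh, hhl, hhr⟩ := hZ.exists_right_eq_castSucc hF hr
      fun hl => hg (Arc.ext hl hr)
    refine ⟨h, hhg, hgh, fun k hk hgk => ?_⟩
    simp only [Covers, Fin.ext_iff, Fin.val_castSucc, Fin.val_succ] at *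
    omega

theorem exists_common_gap (hZ : IsZigzag (gapTree F)) (hF : IsGapAssignment F) (g : Fin N) :
    ∃ c, (F g).Covers c ∧ ∀ h, (F g).Covers h → (F h).Covers c := by
  induction hk : (F g).length using Nat.strong_induction_on generalizing g with | _ k ih =>
  by_cases hg : F g = border g
  · refine ⟨g, hF.covers g, fun h hgh => ?_⟩
    obtain rfl : h = g := by
      simp only [hg, border, Covers, Fin.val_castSucc, Fin.val_succ] at hgh
      omega
    exact hF.covers h
  · obtain ⟨h, hhg, hgh, hcover⟩ := hZ.exists_covers_of_ne_border hF hg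
    obtain ⟨c, hhc, hc⟩ := ih _ (hk ▸ hF.length_lt hhg.symm hgh) h rfl
    have hgc : (F g).Covers c := hhc.mono (hF.nested hhg.symm hgh).1
    refine ⟨c, hgc, fun i hgi => ?_⟩
    rcases eq_or_ne i g with rfl | hig
    · exact hgc
    · exact hc i (hcover i hig hgi)

end IsZigzag

end Zigzag

theorem exists_flipSeq_of_isZigzag_of_mem {T U : Finset (Edge (N + 1))} (hT : NCST T) (hU : NCST U)
    (hZ : IsZigzag T) (hroot : s(0, Fin.last N) ∈ T) : ∃ k, FlipSeq T U k ∧ 2 * k ≤ 3 * N := by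
  obtain ⟨F, hF, rfl⟩ := hT.exists_isGapAssignment
  obtain ⟨G, hG, rfl⟩ := hU.exists_isGapAssignment
  obtain ⟨g, hg⟩ := mem_gapTree.1 hroot
  have hlast : (0 : Fin (N + 1)) < Fin.last N := Nat.zero_lt_of_lt g.isLt
  have hg' : F g = ⟨0, Fin.last N, hlast⟩ := Arc.chord_injective hg
  obtain ⟨c, -, hc⟩ := hZ.exists_common_gap hF g
  exact hF.exists_flipSeq_of_forall_covers hG fun h =>
    hc h (by simp only [hg', Covers, Fin.val_zero, Fin.val_last]; omega)

/-! ### Rotations -/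

section Permute

variable {σ : Equiv.Perm (Fin n)} {T U : Finset (Edge n)}

/-- A relabelling of the points, such as a rotation, under which the crossing relation is
invariant. -/
def PreservesCross (σ : Equiv.Perm (Fin n)) : Prop :=
  ∀ e f : Edge n, Cross (e.map σ) (f.map σ) ↔ Cross e f

/-- The edge set obtained by relabelling the points by `σ`. -/
def permute (σ : Equiv.Perm (Fin n)) (T : Finset (Edge n)) : Finset (Edge n) :=
  T.map σ.toEmbedding.sym2Map

theorem mem_permute {e : Edge n} : e ∈ permute σ T ↔ ∃ f ∈ T, f.map σ = e :=
  Finset.mem_map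

theorem mk_mem_permute {a b : Fin n} : s(σ a, σ b) ∈ permute σ T ↔ s(a, b) ∈ T :=
  mem_map' (a := s(a, b)) σ.toEmbedding.sym2Map

theorem permute_symm_permute (σ : Equiv.Perm (Fin n)) (T : Finset (Edge n)) :
    permute σ.symm (permute σ T) = T := by
  ext e
  induction e using Sym2.inductionOn with | _ a b =>
  nth_rw 1 [← σ.symm_apply_apply a, ← σ.symm_apply_apply b]
  rw [mk_mem_permute, mk_mem_permute]

theorem PreservesCross.symm (hσ : PreservesCross σ) : PreservesCross σ.symm := fun e f => by
  rw [← hσ, Sym2.map_map, Sym2.map_map, Equiv.self_comp_symm, Sym2.map_id, id, id]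

theorem NCST.permute (hσ : PreservesCross σ) (hT : NCST T) : NCST (permute σ T) := by
  obtain ⟨⟨hconn, hcard, hloop⟩, hcross⟩ := hT
  let φ : SimpleGraph.fromEdgeSet (T : Set (Edge n)) ≃g
      SimpleGraph.fromEdgeSet (_root_.permute σ T : Set (Edge n)) :=
    ⟨σ, by simp [mk_mem_permute]⟩
  refine ⟨⟨φ.connected_iff.1 hconn, (card_map _).trans hcard, fun e' he' => ?_⟩,
    fun e' he' f' hf' => ?_⟩
  · obtain ⟨e, he, rfl⟩ := mem_permute.1 he'
    rw [Sym2.isDiag_map σ.injective]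
    exact hloop e he
  · obtain ⟨e, he, rfl⟩ := mem_permute.1 he'
    obtain ⟨f, hf, rfl⟩ := mem_permute.1 hf'
    exact (hσ e f).not.2 (hcross e he f hf)

theorem Flip.permute (hσ : PreservesCross σ) (h : Flip T U) :
    Flip (permute σ T) (permute σ U) := by
  obtain ⟨hT, hU, e, he, f, hf, rfl⟩ := h
  refine ⟨hT.permute hσ, hU.permute hσ, e.map σ, mem_map_of_mem _ he, f.map σ,
    (mem_map' _).not.2 hf, ?_⟩
  exact (map_insert _ _ _).trans (congrArg _ (map_erase _ _ _))

theorem FlipSeq.permute {k : ℕ} (hσ : PreservesCross σ) (h : FlipSeq T U k) :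
    FlipSeq (permute σ T) (permute σ U) k := by
  obtain ⟨f, rfl, rfl, hf⟩ := h
  exact ⟨fun i => _root_.permute σ (f i), rfl, rfl, fun i hi => (hf i hi).permute hσ⟩

theorem IsZigzag.permute (hσ : PreservesCross σ) (hT : IsZigzag T) : IsZigzag (permute σ T) := by
  intro u v w x hd
  obtain ⟨u, rfl⟩ := σ.surjective u
  obtain ⟨v, rfl⟩ := σ.surjective v
  obtain ⟨w, rfl⟩ := σ.surjective w
  obtain ⟨x, rfl⟩ := σ.surjective x
  simp only [mk_mem_permute]
  exact fun huv hvw hwx => (hσ s(v, w) s(u, x)).2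
    (hT u v w x (List.Nodup.of_map σ hd) huv hvw hwx)

theorem Cross.map_addRight {e f : Edge (N + 1)} (h : Cross e f) (k : Fin (N + 1)) :
    Cross (e.map (Equiv.addRight k)) (f.map (Equiv.addRight k)) := by
  obtain ⟨a, b, c, d, rfl, rfl, -, -, h⟩ := h
  simp only [Sym2.map_mk, Equiv.coe_addRight, cross_mk_iff, Fin.lt_def, Fin.val_add_eq_ite]
  split_ifs <;> omega

theorem preservesCross_addRight (k : Fin (N + 1)) : PreservesCross (Equiv.addRight k) :=
  fun e f => ⟨fun h => by simpa [Sym2.map_map, Function.comp_def] using h.map_addRight (-k),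
    fun h => h.map_addRight k⟩

end Permute

theorem exists_flipSeq_of_isZigzag {T U : Finset (Edge (N + 1))} (hT : NCST T) (hU : NCST U)
    (hZ : IsZigzag T) : ∃ k, FlipSeq T U k ∧ 2 * k ≤ 3 * N := by
  obtain ⟨F, hF, hFT⟩ := hT.exists_isGapAssignment
  rcases Nat.eq_zero_or_pos N with rfl | hN
  · obtain rfl : T = U := (card_eq_zero.1 hT.1.2.1).trans (card_eq_zero.1 hU.1.2.1).symm
    exact ⟨0, .refl T, Nat.zero_le _⟩
  obtain ⟨g, hg⟩ := card_pos.1 (Nat.zero_lt_of_lt (hF.card_wide_lt_card_border hN))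
  have hborder : s(g.castSucc, g.succ) ∈ T := hFT ▸ mem_gapTree.2 ⟨g, by
    rw [(mem_filter_univ g).1 hg, chord, border]⟩
  -- Rotating by `-(g + 1)` moves the border edge `{g, g + 1}` to `{N, 0}`.
  have hσ := preservesCross_addRight (-g.succ)
  have hroot : s(0, Fin.last N) ∈ permute (Equiv.addRight (-g.succ)) T := by
    have hlast : g.castSucc + -g.succ = Fin.last N := by
      rw [← sub_eq_add_neg, sub_eq_iff_eq_add, ← Fin.coeSucc_eq_succ, add_left_comm,
        Fin.last_add_one, add_zero]
    have hzero : g.succ + -g.succ = 0 := add_neg_cancel _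
    rw [Sym2.eq_swap, ← hlast, ← hzero]
    exact mk_mem_permute.2 hborder
  obtain ⟨k, hk, hkN⟩ :=
    exists_flipSeq_of_isZigzag_of_mem (hT.permute hσ) (hU.permute hσ) (hZ.permute hσ) hroot
  refine ⟨k, ?_, hkN⟩
  simpa only [permute_symm_permute] using hk.permute hσ.symm

/-- If `T₁` is a nice caterpillar, there is a flip sequence between `T₁` and `T₂`
of length at most `(3/2) n`. -/
theorem nice_caterpillar_flip {n : ℕ} (T₁ T₂ : Finset (Edge n))
    (h₁ : NCST T₁) (h₂ : NCST T₂) (hcat : NiceCaterpillar T₁) :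
    ∃ k : ℕ, FlipSeq T₁ T₂ k ∧ (k : ℝ) ≤ 3 * n / 2 := by
  cases n with
  | zero => exact h₁.1.1.nonempty.elim fun v => v.elim0
  | succ N =>
    obtain ⟨k, hk, hkN⟩ := exists_flipSeq_of_isZigzag h₁ h₂ hcat.isZigzag
    have hkN' : (2 * k : ℝ) ≤ 3 * N := mod_cast hkN
    refine ⟨k, hk, ?_⟩
    push_cast
    linarith
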